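/- Let ω: S² → S⁴ be a linearly full, smooth, S¹-equivariant harmonic sphere. Then there exist μ₁, μ₂ ∈ ℂ∖{0} and a sign ε ∈ {+1,−1} such that ε·ω = ω_{μ₁,μ₂}, where ω_{μ₁,μ₂} is the explicit map given in homogeneous coordinates by ω_{μ₁,μ₂}([z₀,z₁]) = D⁻¹·( |z₀|⁶ − |μ₁|²|z₀|⁴|z₁|² − |μ₂|²|z₀|²|z₁|⁴ + (|μ₁|²|μ₂|²/9)|z₁|⁶ , 2μ₁ z̄₀z₁(|z₀|⁴ − (|μ₂|²/3)|z₁|⁴) , 2μ₂ z̄₀²z₁²(|z₀|² + (|μ₁|²/3)|z₁|²) ), with D = |z₀|⁶ + |μ₁|²|z₀|⁴|z₁|² + |μ₂|²|z₀|²|z₁|⁴ + (|μ₁|²|μ₂|²/9)|z₁|⁶. In other words, up to composition with the antipodal map of S⁴, every linearly full S¹-equivariant harmonic sphere into S⁴ belongs to this two-complex-parameter family. -/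

import Mathlib

noncomputable section

open MeasureTheory
open scoped Classical

abbrev E3 : Type := EuclideanSpace ℝ (Fin 3)

abbrev V5 : Type := ℝ × ℂ × ℂ

/-- Squared Euclidean norm on ℝ ⊕ ℂ ⊕ ℂ. -/
def nsq (p : V5) : ℝ := p.1 ^ 2 + Complex.normSq p.2.1 + Complex.normSq p.2.2

/-- Real inner product on ℝ ⊕ ℂ ⊕ ℂ. -/
def vdot (p q : V5) : ℝ :=
  p.1 * q.1 + (p.2.1 * (starRingEnd ℂ) q.2.1).re + (p.2.2 * (starRingEnd ℂ) q.2.2).re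

/-- The circle action R_α · (t, ζ₁, ζ₂) = (t, e^{iα}ζ₁, e^{2iα}ζ₂) on ℝ ⊕ ℂ ⊕ ℂ. -/
def circAct (α : ℝ) (p : V5) : V5 :=
  (p.1, Complex.exp (Complex.I * (α : ℂ)) * p.2.1,
    Complex.exp (2 * Complex.I * (α : ℂ)) * p.2.2)

/-- Rotation of ℝ³ by angle α about the x₃-axis. -/
def rot3 (α : ℝ) (x : E3) : E3 :=
  EuclideanSpace.single (0 : Fin 3) (Real.cos α * x 0 - Real.sin α * x 1) +
    EuclideanSpace.single (1 : Fin 3) (Real.sin α * x 0 + Real.cos α * x 1) +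
    EuclideanSpace.single (2 : Fin 3) (x 2)

/-- The unit sphere S² ⊂ ℝ³. -/
def sphere2 : Set E3 := Metric.sphere (0 : E3) 1

def northPole : E3 := EuclideanSpace.single (2 : Fin 3) (1 : ℝ)

def southPole : E3 := EuclideanSpace.single (2 : Fin 3) (-1 : ℝ)

/-- Degree-zero homogeneous extension of a map defined on the sphere. -/
def homExt (ω : E3 → V5) : E3 → V5 := fun x => ω (‖x‖⁻¹ • x)

def homExtR (g : E3 → ℝ) : E3 → ℝ := fun x => g (‖x‖⁻¹ • x)

/-- Squared Euclidean norm of the differential. -/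
def gradSq (f : E3 → V5) (x : E3) : ℝ :=
  ∑ i : Fin 3, nsq (fderiv ℝ f x (EuclideanSpace.single i (1 : ℝ)))

def gradSqR (f : E3 → ℝ) (x : E3) : ℝ :=
  ∑ i : Fin 3, fderiv ℝ f x (EuclideanSpace.single i (1 : ℝ)) ^ 2

/-- Componentwise Euclidean Laplacian. -/
def lap (f : E3 → V5) (x : E3) : V5 :=
  ∑ i : Fin 3,
    fderiv ℝ (fun y => fderiv ℝ f y (EuclideanSpace.single i (1 : ℝ))) x
      (EuclideanSpace.single i (1 : ℝ))

/-- ω : S² → S⁴ is a (smooth) harmonic sphere: it maps the sphere into the unit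
sphere of ℝ ⊕ ℂ ⊕ ℂ, its degree-zero homogeneous extension Q is smooth away from
the origin, and ΔQ + |∇Q|²Q = 0 on ℝ³ ∖ {0}. -/
def IsHarmonicSphere (ω : E3 → V5) : Prop :=
  (∀ x ∈ sphere2, nsq (ω x) = 1) ∧
    ContDiffOn ℝ (⊤ : ℕ∞) (homExt ω) {(0 : E3)}ᶜ ∧
    ∀ x : E3, x ≠ 0 → lap (homExt ω) x + gradSq (homExt ω) x • homExt ω x = 0

/-- S¹-equivariance of a sphere map. -/
def EquivariantS (ω : E3 → V5) : Prop :=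
  ∀ α : ℝ, ∀ x ∈ sphere2, ω (rot3 α x) = circAct α (ω x)

/-- S¹-equivariance of a vector field on ℝ³. -/
def EquivariantV (X : E3 → V5) : Prop :=
  ∀ (α : ℝ) (x : E3), X (rot3 α x) = circAct α (X x)

/-- Tangential part X_T = X - (w·X)w. -/
def tangPart (w X : E3 → V5) : E3 → V5 := fun x => X x - vdot (w x) (X x) • w x

/-- Second variation δ²E₀(w)[X] = ∫ (|∇X_T|² - |∇w|²|X_T|²). -/
def secondVar (w X : E3 → V5) : ℝ :=
  ∫ x : E3, (gradSq (tangPart w X) x - gradSq w x * nsq (tangPart w X x))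

/-- Stability of a tangent map within the S¹-equivariant class. -/
def IsStable (w : E3 → V5) : Prop :=
  ∀ X : E3 → V5, ContDiff ℝ (⊤ : ℕ∞) X → HasCompactSupport X → EquivariantV X →
    0 ≤ secondVar w X

def conj' (z : ℂ) : ℂ := (starRingEnd ℂ) z

/-- The twistor fibration, in homogeneous coordinates on ℂ⁴ ∖ {0}. -/
def tau4 (w0 w1 w2 w3 : ℂ) : V5 :=
  ((Complex.normSq w0 + Complex.normSq w3 - Complex.normSq w1 - Complex.normSq w2) /
      (Complex.normSq w0 + Complex.normSq w1 + Complex.normSq w2 + Complex.normSq w3),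
    2 * (conj' w0 * w1 + conj' w2 * w3) /
      ((Complex.normSq w0 + Complex.normSq w1 + Complex.normSq w2 + Complex.normSq w3 : ℝ) : ℂ),
    2 * (conj' w0 * w2 - conj' w1 * w3) /
      ((Complex.normSq w0 + Complex.normSq w1 + Complex.normSq w2 + Complex.normSq w3 : ℝ) : ℂ))

/-- Inverse stereographic projection ℂ → S² (from the south pole). -/
def stInv (z : ℂ) : E3 :=
  EuclideanSpace.single (0 : Fin 3) (2 * z.re / (1 + Complex.normSq z)) +
    EuclideanSpace.single (1 : Fin 3) (2 * z.im / (1 + Complex.normSq z)) +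
    EuclideanSpace.single (2 : Fin 3) ((1 - Complex.normSq z) / (1 + Complex.normSq z))

/-- Equatorial embedding ω_eq^{(1)}(x) = (x₃, x₁ + ix₂, 0). -/
def omegaEq1 (x : E3) : V5 := (x 2, (x 0 : ℂ) + (x 1 : ℂ) * Complex.I, 0)

/-- Equatorial embedding ω_eq^{(2)}(x) = (x₃, 0, x₁ + ix₂). -/
def omegaEq2 (x : E3) : V5 := (x 2, 0, (x 0 : ℂ) + (x 1 : ℂ) * Complex.I)

/-- The horizontal algebraic curve composed with the twistor fibration. -/
def liftCurve (μ1 μ2 z0 z1 : ℂ) : V5 :=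
  tau4 (z0 ^ 3) (μ1 * z0 ^ 2 * z1) (μ2 * z0 * z1 ^ 2) (-(μ1 * μ2 / 3) * z1 ^ 3)

/-- The explicit two-parameter family ω_{μ₁,μ₂} of equivariant harmonic spheres,
as a map defined on S² via the identification [z₀, z₁] ↦ σ₂⁻¹(z₁/z₀). -/
def omegaFam (μ1 μ2 : ℂ) (x : E3) : V5 :=
  if x = southPole then
    if μ1 = 0 ∧ μ2 = 0 then ((1 : ℝ), 0, 0)
    else if μ1 ≠ 0 ∧ μ2 ≠ 0 then liftCurve μ1 μ2 0 1
    else ((-1 : ℝ), 0, 0)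
  else liftCurve μ1 μ2 ((1 + x 2 : ℝ) : ℂ) ((x 0 : ℂ) + (x 1 : ℂ) * Complex.I)

/-- Wirtinger derivative ∂f/∂z̄ = ½(∂_{x₁} + i ∂_{x₂})f. -/
def wd (f : ℂ → ℂ) (z : ℂ) : ℂ :=
  (1 / 2 : ℂ) * (fderiv ℝ f z 1 + Complex.I * fderiv ℝ f z Complex.I)

/-- Surface (2-dimensional Hausdorff) measure on ℝ³. -/
def surf : Measure E3 := Measure.hausdorffMeasure 2

/-!
Parametrise a meridian of `S²` by `u ↦ (1, 0, -sinh u)`, up to scaling, so that `z₁ / z₀ = exp u`.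
By homogeneity and equivariance the harmonic map equation becomes an ordinary differential equation
`f'' = -G² f - e f` for the restriction `f = (t, ζ₁, ζ₂)` of the map to this meridian, where `G` is
the generator of the circle action and `e = |∇Q|²`. At the pole `u → -∞` both `ζᵢ` and `f'` vanish,
hence so do the Wronskians `Im (conj ζᵢ * ζᵢ')`, which are constant: the `ζᵢ` have constant phases
and, after rotating them away, `f` solves the Neumann system on `S² ⊂ ℝ³` with coefficients
`0, 1, 4`.

Uhlenbeck's integrals keep the values they have at the pole, so `f` runs on the separatrix through
it. There suitable quotients `p`, `q` of position coordinates and angular momenta satisfy `p' = p`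
and `q' = 2 q`, and `f` is a rational function of `p` and `q`. This is the curve `ω_{μ₁,μ₂}` along
the meridian; equivariance and continuity, expressed through the Hopf map `ℂ² ∖ {0} → S²`, extend
the equality to the whole sphere.
-/

section LinearODE

open Filter Topology Set ComplexConjugate

theorem eq_zero_of_hasDerivAt_deriv_smul {E : Type*} [NormedAddCommGroup E] [NormedSpace ℝ E]
    {g : ℝ → ℝ} (hg : Continuous g) {w w' : ℝ → E} (hw : ∀ u, HasDerivAt w (w' u) u)
    (hw' : ∀ u, HasDerivAt w' (g u • w u) u) {u₀ : ℝ} (h₀ : w u₀ = 0) (h₀' : w' u₀ = 0) :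
    w = 0 := by
  funext u
  set a := min u u₀ - 1
  set b := max u u₀ + 1
  have hmem {t : ℝ} (hl : min u u₀ ≤ t) (hr : t ≤ max u u₀) : t ∈ Ioo a b :=
    ⟨by grind, by grind⟩
  obtain ⟨C, hC⟩ := (isCompact_Icc (a := a) (b := b)).exists_bound_of_continuousOn hg.continuousOn
  have hlip : ∀ t ∈ Ioo a b,
      LipschitzOnWith (Real.toNNReal (max 1 C)) (fun z : E × E => (z.2, g t • z.1)) univ := by
    intro t ht
    have hgt : ‖g t‖ ≤ max 1 C := (hC t (Ioo_subset_Icc_self ht)).trans (le_max_right _ _)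
    refine LipschitzOnWith.of_dist_le_mul fun z _ z' _ => ?_
    rw [Real.coe_toNNReal _ (zero_le_one.trans (le_max_left _ _)), dist_eq_norm, dist_eq_norm]
    simp only [Prod.mk_sub_mk, ← smul_sub, Prod.norm_def, norm_smul, Prod.fst_sub, Prod.snd_sub]
    refine max_le ?_ (mul_le_mul hgt (le_max_left _ _) (norm_nonneg _) ((norm_nonneg _).trans hgt))
    exact (one_mul ‖z.2 - z'.2‖).symm.le.trans
      (mul_le_mul (le_max_left _ _) (le_max_right _ _) (norm_nonneg _)
        ((norm_nonneg _).trans hgt))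
  have hpair := ODE_solution_unique_of_mem_Ioo (f := fun t => (w t, w' t)) (g := fun _ => 0)
    hlip (hmem (min_le_right _ _) (le_max_right _ _))
    (fun t _ => ⟨(hw t).prodMk (hw' t), mem_univ _⟩)
    (fun t _ => ⟨(hasDerivAt_const t (0 : E × E)).congr_deriv (by ext <;> simp), mem_univ _⟩)
    (by simp [h₀, h₀'])
  exact congrArg Prod.fst (hpair (hmem (min_le_left _ _) (le_max_left _ _)))

theorem eq_of_hasDerivAt_zero_of_tendsto_atBot {E : Type*} [NormedAddCommGroup E]
    [NormedSpace ℝ E] {f : ℝ → E} {L : E} (hf : ∀ u, HasDerivAt f 0 u)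
    (hL : Tendsto f atBot (𝓝 L)) (u : ℝ) : f u = L := by
  have hconst : f = fun _ => f u := funext fun v =>
    is_const_of_deriv_eq_zero (fun v => (hf v).differentiableAt) (fun v => (hf v).deriv) v u
  exact tendsto_nhds_unique (hconst ▸ tendsto_const_nhds) hL

theorem eq_mul_exp_of_hasDerivAt_mul {f : ℝ → ℝ} {c : ℝ} (hf : ∀ u, HasDerivAt f (c * f u) u)
    (u : ℝ) : f u = f 0 * Real.exp (c * u) := by
  have hder (v : ℝ) : HasDerivAt (fun v => f v * Real.exp (-(c * v))) 0 v := by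
    refine ((hf v).mul ((hasDerivAt_id v).const_mul c).neg.exp).congr_deriv ?_
    ring
  have hconst := is_const_of_deriv_eq_zero (fun v => (hder v).differentiableAt)
    (fun v => (hder v).deriv) u 0
  simp only [mul_zero, neg_zero, Real.exp_zero, mul_one] at hconst
  rw [← hconst, mul_assoc, ← Real.exp_add, neg_add_cancel, Real.exp_zero, mul_one]

theorem exists_unit_conj_mul_im_eq_zero {z z' : ℂ} (h : (conj z * z').im = 0) :
    ∃ c : ℂ, ‖c‖ = 1 ∧ (conj c * z).im = 0 ∧ (conj c * z').im = 0 := by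
  by_cases hz : z = 0
  · by_cases hz' : z' = 0
    · exact ⟨1, by simp, by simp [hz], by simp [hz']⟩
    · refine ⟨z' / (‖z'‖ : ℂ), by simp [hz'], by simp [hz], ?_⟩
      rw [map_div₀, Complex.conj_ofReal, div_mul_eq_mul_div, Complex.div_ofReal_im,
        ← Complex.normSq_eq_conj_mul_self, Complex.ofReal_im, zero_div]
  · refine ⟨z / (‖z‖ : ℂ), by simp [hz], ?_, ?_⟩
    · rw [map_div₀, Complex.conj_ofReal, div_mul_eq_mul_div, Complex.div_ofReal_im,
        ← Complex.normSq_eq_conj_mul_self, Complex.ofReal_im, zero_div]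
    · rw [map_div₀, Complex.conj_ofReal, div_mul_eq_mul_div, Complex.div_ofReal_im, h, zero_div]

theorem im_conj_mul_deriv_eq_zero {g : ℝ → ℝ} {w w' : ℝ → ℂ} (hw : ∀ u, HasDerivAt w (w' u) u)
    (hw' : ∀ u, HasDerivAt w' (g u • w u) u) (hlim : Tendsto w atBot (𝓝 0))
    (hlim' : Tendsto w' atBot (𝓝 0)) (u : ℝ) : (conj (w u) * w' u).im = 0 := by
  refine eq_of_hasDerivAt_zero_of_tendsto_atBot (f := fun u => (conj (w u) * w' u).im)
    (fun u => ?_) ?_ u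
  · have hder := Complex.imCLM.hasFDerivAt.comp_hasDerivAt u ((hw u).star.mul (hw' u))
    refine hder.congr_deriv ?_
    simp
    ring
  · have hmul : Tendsto (fun u => conj (w u) * w' u) atBot (𝓝 0) := by
      simpa using ((Complex.continuous_conj.tendsto 0).comp hlim).mul hlim'
    exact (Complex.continuous_im.tendsto 0).comp hmul

theorem exists_unit_phase {g : ℝ → ℝ} (hg : Continuous g) {w w' : ℝ → ℂ}
    (hw : ∀ u, HasDerivAt w (w' u) u) (hw' : ∀ u, HasDerivAt w' (g u • w u) u)
    (hwronskian : ∀ u, (conj (w u) * w' u).im = 0) :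
    ∃ (c : ℂ) (A A' : ℝ → ℝ), ‖c‖ = 1 ∧ (∀ u, w u = c * A u) ∧ (∀ u, w' u = c * A' u) ∧
      (∀ u, HasDerivAt A (A' u) u) ∧ ∀ u, HasDerivAt A' (g u * A u) u := by
  obtain ⟨c, hc, h₀, h₀'⟩ := exists_unit_conj_mul_im_eq_zero (hwronskian 0)
  have hrot (u) : HasDerivAt (fun u => conj c * w u) (conj c * w' u) u := (hw u).const_mul _
  have hrot' (u) : HasDerivAt (fun u => conj c * w' u) (g u • (conj c * w u)) u :=
    ((hw' u).const_mul _).congr_deriv (mul_smul_comm _ _ _)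
  have him : (fun u => (conj c * w u).im) = 0 := eq_zero_of_hasDerivAt_deriv_smul hg
    (fun u => Complex.imCLM.hasFDerivAt.comp_hasDerivAt u (hrot u))
    (fun u => (Complex.imCLM.hasFDerivAt.comp_hasDerivAt u (hrot' u)).congr_deriv
      (Complex.imCLM.map_smul _ _)) h₀ h₀'
  have him' (u : ℝ) : (conj c * w' u).im = 0 := by
    have hder : HasDerivAt (fun u => (conj c * w u).im) (conj c * w' u).im u :=
      Complex.imCLM.hasFDerivAt.comp_hasDerivAt u (hrot u)
    exact (him ▸ hder).unique (hasDerivAt_const u 0)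
  have hcancel {z : ℂ} (hz : (conj c * z).im = 0) : z = c * (conj c * z).re := by
    rw [Complex.conj_eq_iff_re.1 (Complex.conj_eq_iff_im.2 hz), ← mul_assoc, Complex.mul_conj,
      Complex.normSq_eq_norm_sq, hc]
    simp
  exact ⟨c, fun u => (conj c * w u).re, fun u => (conj c * w' u).re, hc,
    fun u => hcancel (congrFun him u), fun u => hcancel (him' u),
    fun u => Complex.reCLM.hasFDerivAt.comp_hasDerivAt u (hrot u),
    fun u => (Complex.reCLM.hasFDerivAt.comp_hasDerivAt u (hrot' u)).congr_deriv
      (Complex.reCLM.map_smul _ _)⟩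

end LinearODE

section LiftCurve

open ComplexConjugate

@[fun_prop]
theorem continuous_conj' : Continuous conj' :=
  Complex.continuous_conj

theorem tau4_mul {k : ℂ} (hk : k ≠ 0) (w0 w1 w2 w3 : ℂ) :
    tau4 (k * w0) (k * w1) (k * w2) (k * w3) = tau4 w0 w1 w2 w3 := by
  have hk' : Complex.normSq k ≠ 0 := Complex.normSq_eq_zero.not.2 hk
  have hkC : (Complex.normSq k : ℂ) ≠ 0 := Complex.ofReal_ne_zero.2 hk'
  have hconj (a b : ℂ) : conj (k * a) * (k * b) = Complex.normSq k * (conj a * b) := by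
    rw [map_mul, Complex.normSq_eq_conj_mul_self]
    ring
  simp only [tau4, conj', Complex.normSq_mul, hconj, ← mul_add, ← mul_sub, Complex.ofReal_mul,
    mul_left_comm (2 : ℂ), mul_div_mul_left _ _ hk', mul_div_mul_left _ _ hkC]

theorem tau4_unit_mul {c1 c2 : ℂ} (h1 : ‖c1‖ = 1) (h2 : ‖c2‖ = 1) (w0 w1 w2 w3 : ℂ) :
    tau4 w0 (c1 * w1) (c2 * w2) (c1 * c2 * w3) =
      ((tau4 w0 w1 w2 w3).1, c1 * (tau4 w0 w1 w2 w3).2.1, c2 * (tau4 w0 w1 w2 w3).2.2) := by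
  have hn {c : ℂ} (hc : ‖c‖ = 1) : Complex.normSq c = 1 := by
    rw [Complex.normSq_eq_norm_sq, hc, one_pow]
  have hconj {c : ℂ} (hc : ‖c‖ = 1) : conj c * c = 1 := by
    rw [← Complex.normSq_eq_conj_mul_self, hn hc, Complex.ofReal_one]
  simp only [tau4, conj', hn h1, hn h2, one_mul, map_mul, ← mul_div_assoc]
  congr 3
  · linear_combination 2 * c1 * conj w2 * w3 * hconj h2
  · linear_combination -2 * c2 * conj w1 * w3 * hconj h1

theorem continuousAt_tau4 {w : Fin 4 → ℂ} (hw : w ≠ 0) :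
    ContinuousAt (fun w : Fin 4 → ℂ => tau4 (w 0) (w 1) (w 2) (w 3)) w := by
  have hN : Complex.normSq (w 0) + Complex.normSq (w 1) + Complex.normSq (w 2) +
      Complex.normSq (w 3) ≠ 0 := by
    obtain ⟨i, hi⟩ := Function.ne_iff.1 hw
    rw [← Fin.sum_univ_four fun j => Complex.normSq (w j)]
    exact (Finset.sum_pos' (fun j _ => Complex.normSq_nonneg _)
      ⟨i, Finset.mem_univ i, Complex.normSq_pos.2 hi⟩).ne'
  have hNC := Complex.ofReal_ne_zero.2 hN
  refine ContinuousAt.prodMk (.div₀ ?_ ?_ hN) (.prodMk (.div₀ ?_ ?_ hNC) (.div₀ ?_ ?_ hNC))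
  all_goals fun_prop

theorem liftCurve_mul_mul {k : ℂ} (hk : k ≠ 0) (μ1 μ2 z0 z1 : ℂ) :
    liftCurve μ1 μ2 (k * z0) (k * z1) = liftCurve μ1 μ2 z0 z1 := by
  rw [liftCurve, liftCurve, ← tau4_mul (pow_ne_zero 3 hk) (z0 ^ 3)]
  ring_nf

theorem liftCurve_mul_right (w μ1 μ2 z0 z1 : ℂ) :
    liftCurve μ1 μ2 z0 (w * z1) = liftCurve (w * μ1) (w ^ 2 * μ2) z0 z1 := by
  simp only [liftCurve]
  ring_nf

theorem liftCurve_unit_mul {c1 c2 : ℂ} (h1 : ‖c1‖ = 1) (h2 : ‖c2‖ = 1) (μ1 μ2 z0 z1 : ℂ) :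
    liftCurve (c1 * μ1) (c2 * μ2) z0 z1 =
      ((liftCurve μ1 μ2 z0 z1).1, c1 * (liftCurve μ1 μ2 z0 z1).2.1,
        c2 * (liftCurve μ1 μ2 z0 z1).2.2) := by
  rw [liftCurve, liftCurve, ← tau4_unit_mul h1 h2]
  ring_nf

theorem circAct_liftCurve (α : ℝ) (μ1 μ2 z0 z1 : ℂ) :
    circAct α (liftCurve μ1 μ2 z0 z1) =
      liftCurve μ1 μ2 z0 (Complex.exp (Complex.I * α) * z1) := by
  have hnorm : ‖Complex.exp (Complex.I * α)‖ = 1 := by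
    rw [mul_comm, Complex.norm_exp_ofReal_mul_I]
  rw [liftCurve_mul_right, liftCurve_unit_mul hnorm (by rw [norm_pow, hnorm, one_pow]), circAct,
    ← Complex.exp_nat_mul, Nat.cast_two, mul_assoc]

theorem liftCurve_ofReal (p q : ℝ) :
    liftCurve p q 1 1 =
      ((1 - p ^ 2 - q ^ 2 + p ^ 2 * q ^ 2 / 9) / (1 + p ^ 2 + q ^ 2 + p ^ 2 * q ^ 2 / 9),
        ((2 * p * (1 - q ^ 2 / 3) / (1 + p ^ 2 + q ^ 2 + p ^ 2 * q ^ 2 / 9) : ℝ) : ℂ),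
        ((2 * q * (1 + p ^ 2 / 3) / (1 + p ^ 2 + q ^ 2 + p ^ 2 * q ^ 2 / 9) : ℝ) : ℂ)) := by
  refine Prod.ext ?_ (Prod.ext ?_ ?_)
  all_goals simp [liftCurve, tau4, conj', Complex.normSq_ofReal]
  all_goals ring_nf

theorem continuousAt_liftCurve {μ1 μ2 : ℂ} (h1 : μ1 ≠ 0) (h2 : μ2 ≠ 0) {z : ℂ × ℂ} (hz : z ≠ 0) :
    ContinuousAt (fun z : ℂ × ℂ => liftCurve μ1 μ2 z.1 z.2) z := by
  have hw : ![z.1 ^ 3, μ1 * z.1 ^ 2 * z.2, μ2 * z.1 * z.2 ^ 2, -(μ1 * μ2 / 3) * z.2 ^ 3] ≠ 0 := by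
    intro h
    have h0 := congrFun h 0
    have h3 := congrFun h 3
    exact hz (Prod.ext (by simpa using h0) (by simpa [h1, h2] using h3))
  have hcont : Continuous fun z : ℂ × ℂ =>
      ![z.1 ^ 3, μ1 * z.1 ^ 2 * z.2, μ2 * z.1 * z.2 ^ 2, -(μ1 * μ2 / 3) * z.2 ^ 3] := by
    refine continuous_pi fun i => ?_
    fin_cases i <;> dsimp <;> fun_prop
  exact ContinuousAt.comp (f := fun z : ℂ × ℂ =>
      ![z.1 ^ 3, μ1 * z.1 ^ 2 * z.2, μ2 * z.1 * z.2 ^ 2, -(μ1 * μ2 / 3) * z.2 ^ 3])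
    (continuousAt_tau4 hw) hcont.continuousAt

end LiftCurve

section Neumann

open Filter Topology

/-- A solution of the Neumann system: a point `x` with velocity `v` on the unit sphere of `ℝ^ι`
under the quadratic potential with coefficients `a`, with Lagrange multiplier `e`. -/
structure IsNeumannSolution {ι : Type*} [Fintype ι] (a : ι → ℝ) (e : ℝ → ℝ)
    (x v : ι → ℝ → ℝ) : Prop where
  hasDerivAt_pos : ∀ i u, HasDerivAt (x i) (v i u) u
  hasDerivAt_vel : ∀ i u, HasDerivAt (v i) ((a i - e u) * x i u) u
  sum_sq : ∀ u, ∑ i, x i u ^ 2 = 1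

/-- The `i`-`j` component `x ∧ v` of the angular momentum. -/
def angularMomentum {ι : Type*} (x v : ι → ℝ → ℝ) (i j : ι) (u : ℝ) : ℝ :=
  x i u * v j u - x j u * v i u

/-- Uhlenbeck's first integrals of the Neumann system. The term `j = i` is `0 / 0 = 0`. -/
def uhlenbeckIntegral {ι : Type*} [Fintype ι] (a : ι → ℝ) (x v : ι → ℝ → ℝ) (i : ι) (u : ℝ) : ℝ :=
  x i u ^ 2 + ∑ j, angularMomentum x v i j u ^ 2 / (a j - a i)

namespace IsNeumannSolution

variable {ι : Type*} [Fintype ι] {a : ι → ℝ} {e : ℝ → ℝ} {x v : ι → ℝ → ℝ}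

theorem neg (h : IsNeumannSolution a e x v) : IsNeumannSolution a e (-x) (-v) where
  hasDerivAt_pos i u := (h.hasDerivAt_pos i u).neg
  hasDerivAt_vel i u := (h.hasDerivAt_vel i u).neg.congr_deriv (by simp)
  sum_sq u := by simpa using h.sum_sq u

theorem sum_mul_eq_zero (h : IsNeumannSolution a e x v) (u : ℝ) : ∑ i, x i u * v i u = 0 := by
  have hder : HasDerivAt (fun u => ∑ i, x i u ^ 2) (∑ i, 2 * (x i u * v i u)) u :=
    HasDerivAt.fun_sum fun i _ => ((h.hasDerivAt_pos i u).pow 2).congr_deriv (by ring)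
  rw [funext h.sum_sq, ← Finset.mul_sum] at hder
  linarith [hder.unique (hasDerivAt_const u 1)]

theorem hasDerivAt_angularMomentum (h : IsNeumannSolution a e x v) (i j : ι) (u : ℝ) :
    HasDerivAt (angularMomentum x v i j) ((a j - a i) * (x i u * x j u)) u :=
  (((h.hasDerivAt_pos i u).mul (h.hasDerivAt_vel j u)).sub
    ((h.hasDerivAt_pos j u).mul (h.hasDerivAt_vel i u))).congr_deriv (by ring)

theorem continuous_angularMomentum (h : IsNeumannSolution a e x v) (i j : ι) :
    Continuous (angularMomentum x v i j) :=
  continuous_iff_continuousAt.2 fun u => (h.hasDerivAt_angularMomentum i j u).continuousAt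

theorem sum_angularMomentum_mul (h : IsNeumannSolution a e x v) (i : ι) (u : ℝ) :
    ∑ j, angularMomentum x v i j u * x j u = -v i u := by
  calc ∑ j, angularMomentum x v i j u * x j u
      = x i u * ∑ j, x j u * v j u - v i u * ∑ j, x j u ^ 2 := by
        simp only [angularMomentum, Finset.mul_sum, ← Finset.sum_sub_distrib]
        exact Finset.sum_congr rfl fun j _ => by ring
    _ = -v i u := by rw [h.sum_mul_eq_zero, h.sum_sq]; ring

theorem hasDerivAt_uhlenbeckIntegral (h : IsNeumannSolution a e x v) (ha : a.Injective) (i : ι)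
    (u : ℝ) : HasDerivAt (uhlenbeckIntegral a x v i) 0 u := by
  have hterm (j : ι) : HasDerivAt (fun u => angularMomentum x v i j u ^ 2 / (a j - a i))
      (2 * x i u * (angularMomentum x v i j u * x j u)) u := by
    refine (((h.hasDerivAt_angularMomentum i j u).pow 2).div_const _).congr_deriv ?_
    rcases eq_or_ne i j with rfl | hij
    · simp [angularMomentum]
    · have := sub_ne_zero.2 (ha.ne hij.symm)
      field_simp
      ring
  refine (((h.hasDerivAt_pos i u).pow 2).add
    (HasDerivAt.fun_sum fun j _ => hterm j)).congr_deriv ?_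
  rw [← Finset.mul_sum, h.sum_angularMomentum_mul]
  ring

theorem abs_le_one (h : IsNeumannSolution a e x v) (i : ι) (u : ℝ) : |x i u| ≤ 1 := by
  rw [← sq_le_one_iff_abs_le_one, ← h.sum_sq u]
  exact Finset.single_le_sum (f := fun j => x j u ^ 2) (fun _ _ => sq_nonneg _) (Finset.mem_univ i)

theorem tendsto_angularMomentum (h : IsNeumannSolution a e x v) {l : Filter ℝ}
    (hv : ∀ i, Tendsto (v i) l (𝓝 0)) (i j : ι) : Tendsto (angularMomentum x v i j) l (𝓝 0) := by
  have hprod (i j : ι) : Tendsto (fun u => x i u * v j u) l (𝓝 0) :=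
    bdd_le_mul_tendsto_zero' 1 (.of_forall fun u => h.abs_le_one i u) (hv j)
  have hsub := (hprod i j).sub (hprod j i)
  rw [sub_zero] at hsub
  exact hsub

theorem uhlenbeckIntegral_eq_zero (h : IsNeumannSolution a e x v) (ha : a.Injective)
    (hv : ∀ i, Tendsto (v i) atBot (𝓝 0)) {i : ι} (hx : Tendsto (x i) atBot (𝓝 0)) (u : ℝ) :
    uhlenbeckIntegral a x v i u = 0 := by
  refine eq_of_hasDerivAt_zero_of_tendsto_atBot (h.hasDerivAt_uhlenbeckIntegral ha i) ?_ u
  have hlim := (hx.pow 2).add (tendsto_finsetSum Finset.univ fun j _ =>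
    ((h.tendsto_angularMomentum hv i j).pow 2).div_const (a j - a i))
  simp only [ne_eq, OfNat.ofNat_ne_zero, not_false_eq_true, zero_pow, zero_div,
    Finset.sum_const_zero, add_zero] at hlim
  exact hlim

theorem eq_zero_of_angularMomentum_eq_zero (h : IsNeumannSolution a e x v) (he : Continuous e)
    {i : ι} {u₀ : ℝ} (hx : x i u₀ = 0) (hL : ∀ j, angularMomentum x v i j u₀ = 0) : x i = 0 := by
  have hv : v i u₀ = 0 := by simpa [hL] using h.sum_angularMomentum_mul i u₀
  exact eq_zero_of_hasDerivAt_deriv_smul (g := fun u => a i - e u) (by fun_prop)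
    (h.hasDerivAt_pos i) (h.hasDerivAt_vel i) hx hv

end IsNeumannSolution

/-- The relations between a position `(t, A, B)` on the unit sphere and its angular momenta
`(L, M, l)` on the separatrix of the Neumann system with coefficients `0, 1, 4`: the two Uhlenbeck
integrals vanish and `x ∧ v` is decomposable. -/
structure IsSeparatrixPoint (t A B L M l : ℝ) : Prop where
  sphere : t ^ 2 + A ^ 2 + B ^ 2 = 1
  integral_one : A ^ 2 - L ^ 2 + l ^ 2 / 3 = 0
  integral_two : B ^ 2 - M ^ 2 / 4 - l ^ 2 / 3 = 0
  plucker : t * l = A * M - B * L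

namespace IsSeparatrixPoint

variable {t A B L M l : ℝ}

theorem mul_eq_zero (h : IsSeparatrixPoint t A B L M l) (hl : l = 0) : A * B = 0 := by
  obtain ⟨-, hA, hB, hpl⟩ := h
  subst hl
  have hL : L ^ 2 = A ^ 2 := by linarith
  have hM : M ^ 2 = 4 * B ^ 2 := by linarith
  have hsq : 3 * (A * B) ^ 2 = 0 := by
    linear_combination -(A * M + B * L) * hpl - A ^ 2 * hM + B ^ 2 * hL
  simpa using hsq

theorem sq_eq_sq (h : IsSeparatrixPoint t A B L M l) :
    (4 * (B * L) - A * M) ^ 2 = (2 * l) ^ 2 := by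
  obtain ⟨hsph, hA, hB, hpl⟩ := h
  linear_combination -4 * (t * l + A * M - B * L) * hpl + 12 * A ^ 2 * hB - 12 * B ^ 2 * hA +
    4 * l ^ 2 * hsph

theorem add_mul_sub_one (h : IsSeparatrixPoint t A B L M l) :
    (A + L) * (L - A) = l ^ 2 / 3 := by
  linear_combination -h.integral_one

theorem add_mul_sub_two (h : IsSeparatrixPoint t A B L M l) :
    (B + M / 2) * (B - M / 2) = l ^ 2 / 3 := by
  linear_combination h.integral_two

theorem add_ne_zero_one (h : IsSeparatrixPoint t A B L M l) (hl : l ≠ 0) : A + L ≠ 0 :=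
  fun h₀ => hl (by simpa [h₀] using h.add_mul_sub_one.symm)

theorem add_ne_zero_two (h : IsSeparatrixPoint t A B L M l) (hl : l ≠ 0) : B + M / 2 ≠ 0 :=
  fun h₀ => hl (by simpa [h₀] using h.add_mul_sub_two.symm)

theorem pair_one_eq (h : IsSeparatrixPoint t A B L M l) (hl : l ≠ 0) {q : ℝ}
    (hq : q = l / (A + L)) : A = l * (3 - q ^ 2) / (6 * q) ∧ L = l * (3 + q ^ 2) / (6 * q) := by
  have hX := h.add_ne_zero_one hl
  have hq₀ : q ≠ 0 := hq ▸ div_ne_zero hl hX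
  rw [eq_div_iff hX] at hq
  have hdiff : L - A = l * q / 3 := mul_left_cancel₀ hX
    (by linear_combination h.add_mul_sub_one - l / 3 * hq)
  constructor <;> field_simp
  · linear_combination 3 * hq - 3 * q * hdiff
  · linear_combination 3 * hq + 3 * q * hdiff

theorem pair_two_eq (h : IsSeparatrixPoint t A B L M l) (hl : l ≠ 0) {p : ℝ}
    (hp : p = l / (B + M / 2)) :
    B = l * (3 + p ^ 2) / (6 * p) ∧ M = l * (3 - p ^ 2) / (3 * p) := by
  have hY := h.add_ne_zero_two hl
  have hp₀ : p ≠ 0 := hp ▸ div_ne_zero hl hY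
  rw [eq_div_iff hY] at hp
  have hdiff : B - M / 2 = l * p / 3 := mul_left_cancel₀ hY
    (by linear_combination h.add_mul_sub_two - l / 3 * hp)
  constructor <;> field_simp
  · linear_combination 3 * hp + 3 * p * hdiff
  · linear_combination 3 * hp - 3 * p * hdiff

theorem eq_liftCurve (h : IsSeparatrixPoint t A B L M l) (hl : l ≠ 0)
    (hbranch : 4 * (B * L) - A * M = 2 * l) :
    ((t, (A : ℂ), (B : ℂ)) : V5) =
      liftCurve ((l / (B + M / 2) : ℝ) : ℂ) ((l / (A + L) : ℝ) : ℂ) 1 1 := by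
  have hp : l / (B + M / 2) ≠ 0 := div_ne_zero hl (h.add_ne_zero_two hl)
  have hq : l / (A + L) ≠ 0 := div_ne_zero hl (h.add_ne_zero_one hl)
  obtain ⟨hA, hL⟩ := h.pair_one_eq hl rfl
  obtain ⟨hB, hM⟩ := h.pair_two_eq hl rfl
  have ht : t = (A * M - B * L) / l := eq_div_of_mul_eq hl h.plucker
  generalize l / (B + M / 2) = p at *
  generalize l / (A + L) = q at *
  have hN : 0 < 1 + p ^ 2 + q ^ 2 + p ^ 2 * q ^ 2 / 9 := by positivity
  have hl' : l = 4 * p * q / (1 + p ^ 2 + q ^ 2 + p ^ 2 * q ^ 2 / 9) := by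
    rw [hA, hB, hL, hM] at hbranch
    field_simp at hbranch ⊢
    linear_combination hbranch / 6
  have hA' : A = 2 * p * (1 - q ^ 2 / 3) / (1 + p ^ 2 + q ^ 2 + p ^ 2 * q ^ 2 / 9) := by
    rw [hA, hl']
    field_simp
    ring
  have hB' : B = 2 * q * (1 + p ^ 2 / 3) / (1 + p ^ 2 + q ^ 2 + p ^ 2 * q ^ 2 / 9) := by
    rw [hB, hl']
    field_simp
    ring
  have ht' : t = (1 - p ^ 2 - q ^ 2 + p ^ 2 * q ^ 2 / 9) /
      (1 + p ^ 2 + q ^ 2 + p ^ 2 * q ^ 2 / 9) := by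
    rw [ht, hA, hB, hL, hM, hl']
    field_simp
    ring
  rw [liftCurve_ofReal, ← ht', ← hA', ← hB']

end IsSeparatrixPoint

namespace IsNeumannSolution

variable {e : ℝ → ℝ} {x v : Fin 3 → ℝ → ℝ}

local notation "L₀₁" => angularMomentum x v 0 1
local notation "L₀₂" => angularMomentum x v 0 2
local notation "L₁₂" => angularMomentum x v 1 2

theorem isSeparatrixPoint (h : IsNeumannSolution ![0, 1, 4] e x v)
    (hv : ∀ i, Tendsto (v i) atBot (𝓝 0)) (h₁ : Tendsto (x 1) atBot (𝓝 0))
    (h₂ : Tendsto (x 2) atBot (𝓝 0)) (u : ℝ) :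
    IsSeparatrixPoint (x 0 u) (x 1 u) (x 2 u) (L₀₁ u) (L₀₂ u) (L₁₂ u) := by
  have ha : (![0, 1, 4] : Fin 3 → ℝ).Injective := by
    intro i j
    fin_cases i <;> fin_cases j <;> simp
  have hU₁ := h.uhlenbeckIntegral_eq_zero ha hv h₁ u
  have hU₂ := h.uhlenbeckIntegral_eq_zero ha hv h₂ u
  have hsum := h.sum_sq u
  simp only [uhlenbeckIntegral, angularMomentum, Fin.sum_univ_three, Matrix.cons_val]
    at hU₁ hU₂ hsum
  exact ⟨hsum, by simp only [angularMomentum]; linear_combination hU₁,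
    by simp only [angularMomentum]; linear_combination hU₂, by simp only [angularMomentum]; ring⟩

theorem angularMomentum_one_two_ne_zero (h : IsNeumannSolution ![0, 1, 4] e x v)
    (he : Continuous e) (hsep : ∀ u,
      IsSeparatrixPoint (x 0 u) (x 1 u) (x 2 u) (L₀₁ u) (L₀₂ u) (L₁₂ u))
    (h₁ : x 1 ≠ 0) (h₂ : x 2 ≠ 0) (u : ℝ) : L₁₂ u ≠ 0 := by
  intro hl
  have hanti (i j : Fin 3) : angularMomentum x v i j u = -angularMomentum x v j i u := by
    simp only [angularMomentum]
    ring
  have hself (i : Fin 3) : angularMomentum x v i i u = 0 := sub_self _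
  rcases mul_eq_zero.1 ((hsep u).mul_eq_zero hl) with hA | hB
  · have hL : L₀₁ u = 0 := by simpa [hA, hl] using (hsep u).integral_one
    refine h₁ (h.eq_zero_of_angularMomentum_eq_zero he hA fun j => ?_)
    fin_cases j
    exacts [by simp [hanti 1 0, hL], hself 1, hl]
  · have hM : L₀₂ u = 0 := by simpa [hB, hl] using (hsep u).integral_two
    refine h₂ (h.eq_zero_of_angularMomentum_eq_zero he hB fun j => ?_)
    fin_cases j
    exacts [by simp [hanti 2 0, hM], by simp [hanti 2 1, hl], hself 2]

theorem branch_or_neg_branch (h : IsNeumannSolution ![0, 1, 4] e x v)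
    (hsep : ∀ u, IsSeparatrixPoint (x 0 u) (x 1 u) (x 2 u) (L₀₁ u) (L₀₂ u) (L₁₂ u))
    (hl : ∀ u, L₁₂ u ≠ 0) :
    (∀ u, 4 * (x 2 u * L₀₁ u) - x 1 u * L₀₂ u = 2 * L₁₂ u) ∨
      ∀ u, 4 * (x 2 u * L₀₁ u) - x 1 u * L₀₂ u = -(2 * L₁₂ u) := by
  have hx (i : Fin 3) : Continuous (x i) :=
    continuous_iff_continuousAt.2 fun u => (h.hasDerivAt_pos i u).continuousAt
  have hL := h.continuous_angularMomentum
  have hdichotomy := isPreconnected_univ.eq_or_eq_neg_of_sq_eq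
    (f := fun u => 4 * (x 2 u * L₀₁ u) - x 1 u * L₀₂ u) (g := fun u => 2 * L₁₂ u)
    (by fun_prop) (by fun_prop) (fun u _ => (hsep u).sq_eq_sq)
    (fun {u} _ => mul_ne_zero two_ne_zero (hl u))
  exact hdichotomy.imp (fun hpos u => hpos (Set.mem_univ u)) fun hneg u => hneg (Set.mem_univ u)

theorem hasDerivAt_ratio_one (h : IsNeumannSolution ![0, 1, 4] e x v)
    (hsep : ∀ u, IsSeparatrixPoint (x 0 u) (x 1 u) (x 2 u) (L₀₁ u) (L₀₂ u) (L₁₂ u))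
    (hl : ∀ u, L₁₂ u ≠ 0)
    (hbranch : ∀ u, 4 * (x 2 u * L₀₁ u) - x 1 u * L₀₂ u = 2 * L₁₂ u) (u : ℝ) :
    HasDerivAt (fun u => L₁₂ u / (x 1 u + L₀₁ u)) (2 * (L₁₂ u / (x 1 u + L₀₁ u))) u := by
  have hX := (hsep u).add_ne_zero_one (hl u)
  have hv : v 1 u = x 0 u * L₀₁ u - x 2 u * L₁₂ u := by
    have hsum := h.sum_angularMomentum_mul 1 u
    simp only [angularMomentum, Fin.sum_univ_three] at hsum ⊢
    linear_combination hsum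
  refine ((h.hasDerivAt_angularMomentum 1 2 u).div
    ((h.hasDerivAt_pos 1 u).add (h.hasDerivAt_angularMomentum 0 1 u)) hX).congr_deriv ?_
  simp only [hv, Matrix.cons_val, Pi.add_apply]
  field_simp
  linear_combination -3 * x 2 u * (hsep u).add_mul_sub_one -
    (x 1 u + L₀₁ u) * ((hsep u).plucker - hbranch u)

theorem hasDerivAt_ratio_two (h : IsNeumannSolution ![0, 1, 4] e x v)
    (hsep : ∀ u, IsSeparatrixPoint (x 0 u) (x 1 u) (x 2 u) (L₀₁ u) (L₀₂ u) (L₁₂ u))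
    (hl : ∀ u, L₁₂ u ≠ 0)
    (hbranch : ∀ u, 4 * (x 2 u * L₀₁ u) - x 1 u * L₀₂ u = 2 * L₁₂ u) (u : ℝ) :
    HasDerivAt (fun u => L₁₂ u / (x 2 u + L₀₂ u / 2)) (L₁₂ u / (x 2 u + L₀₂ u / 2)) u := by
  have hY := (hsep u).add_ne_zero_two (hl u)
  have hv : v 2 u = x 0 u * L₀₂ u + x 1 u * L₁₂ u := by
    have hsum := h.sum_angularMomentum_mul 2 u
    simp only [angularMomentum, Fin.sum_univ_three] at hsum ⊢
    linear_combination hsum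
  refine ((h.hasDerivAt_angularMomentum 1 2 u).div
    ((h.hasDerivAt_pos 2 u).add ((h.hasDerivAt_angularMomentum 0 2 u).div_const 2))
      hY).congr_deriv ?_
  simp only [hv, Matrix.cons_val, Pi.add_apply]
  rw [div_eq_div_iff (pow_ne_zero 2 hY) hY]
  linear_combination (x 2 u + L₀₂ u / 2) * (3 * x 1 u * (hsep u).add_mul_sub_two +
    (x 2 u + L₀₂ u / 2) * (hbranch u / 2 - 2 * (hsep u).plucker))

theorem exists_eq_liftCurve (h : IsNeumannSolution ![0, 1, 4] e x v)
    (hsep : ∀ u, IsSeparatrixPoint (x 0 u) (x 1 u) (x 2 u) (L₀₁ u) (L₀₂ u) (L₁₂ u))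
    (hl : ∀ u, L₁₂ u ≠ 0)
    (hbranch : ∀ u, 4 * (x 2 u * L₀₁ u) - x 1 u * L₀₂ u = 2 * L₁₂ u) :
    ∃ p q : ℝ, p ≠ 0 ∧ q ≠ 0 ∧ ∀ u, ((x 0 u, (x 1 u : ℂ), (x 2 u : ℂ)) : V5) =
      liftCurve ((p * Real.exp u : ℝ) : ℂ) ((q * Real.exp (2 * u) : ℝ) : ℂ) 1 1 := by
  refine ⟨L₁₂ 0 / (x 2 0 + L₀₂ 0 / 2), L₁₂ 0 / (x 1 0 + L₀₁ 0),
    div_ne_zero (hl 0) ((hsep 0).add_ne_zero_two (hl 0)),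
    div_ne_zero (hl 0) ((hsep 0).add_ne_zero_one (hl 0)), fun u => ?_⟩
  have hp := eq_mul_exp_of_hasDerivAt_mul (c := 1)
    (fun u => (h.hasDerivAt_ratio_two hsep hl hbranch u).congr_deriv (one_mul _).symm) u
  have hq := eq_mul_exp_of_hasDerivAt_mul (h.hasDerivAt_ratio_one hsep hl hbranch) u
  rw [one_mul] at hp
  rw [(hsep u).eq_liftCurve (hl u) (hbranch u), hp, hq]

theorem exists_sign_eq_liftCurve (h : IsNeumannSolution ![0, 1, 4] e x v)
    (he : Continuous e) (hv : ∀ i, Tendsto (v i) atBot (𝓝 0)) (hx₁ : Tendsto (x 1) atBot (𝓝 0))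
    (hx₂ : Tendsto (x 2) atBot (𝓝 0)) (h₁ : x 1 ≠ 0) (h₂ : x 2 ≠ 0) :
    ∃ ε p q : ℝ, (ε = 1 ∨ ε = -1) ∧ p ≠ 0 ∧ q ≠ 0 ∧
      ∀ u, ((x 0 u, (x 1 u : ℂ), (x 2 u : ℂ)) : V5) =
        ε • liftCurve ((p * Real.exp u : ℝ) : ℂ) ((q * Real.exp (2 * u) : ℝ) : ℂ) 1 1 := by
  have hsep := h.isSeparatrixPoint hv hx₁ hx₂
  have hl := h.angularMomentum_one_two_ne_zero he hsep h₁ h₂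
  -- `x ↦ -x` preserves the angular momenta and so exchanges the two branches: this is the sign `ε`.
  rcases h.branch_or_neg_branch hsep hl with hbranch | hbranch
  · obtain ⟨p, q, hp, hq, heq⟩ := h.exists_eq_liftCurve hsep hl hbranch
    exact ⟨1, p, q, .inl rfl, hp, hq, fun u => by rw [heq, one_smul]⟩
  · have hL (i j : Fin 3) (u : ℝ) :
        angularMomentum (-x) (-v) i j u = angularMomentum x v i j u := by
      simp [angularMomentum]
    obtain ⟨p, q, hp, hq, heq⟩ := h.neg.exists_eq_liftCurve
      (h.neg.isSeparatrixPoint (fun i => neg_zero (G := ℝ) ▸ (hv i).neg)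
        (neg_zero (G := ℝ) ▸ hx₁.neg) (neg_zero (G := ℝ) ▸ hx₂.neg))
      (fun u => by simpa only [hL] using hl u)
      (fun u => by simp only [hL, Pi.neg_apply]; linear_combination -hbranch u)
    refine ⟨-1, p, q, .inr rfl, hp, hq, fun u => ?_⟩
    rw [← heq u]
    simp

end IsNeumannSolution

end Neumann

section MeridianODE

open Filter Topology ComplexConjugate

/-- The infinitesimal generator of `circAct`. -/
def circGen : V5 →L[ℝ] V5 :=
  (0 : V5 →L[ℝ] ℝ).prod
    ((Complex.I • ContinuousLinearMap.fst ℝ ℂ ℂ ∘L ContinuousLinearMap.snd ℝ ℝ (ℂ × ℂ)).prod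
      ((2 * Complex.I) • ContinuousLinearMap.snd ℝ ℂ ℂ ∘L ContinuousLinearMap.snd ℝ ℝ (ℂ × ℂ)))

theorem circGen_apply (p : V5) : circGen p = (0, Complex.I * p.2.1, 2 * Complex.I * p.2.2) := rfl

theorem circGen_circGen (p : V5) : circGen (circGen p) = (0, -p.2.1, -(4 * p.2.2)) := by
  have hI := Complex.I_mul_I
  simp only [circGen_apply]
  refine Prod.ext rfl (Prod.ext ?_ ?_)
  · linear_combination p.2.1 * hI
  · linear_combination 4 * p.2.2 * hI

theorem hasDerivAt_components {f : ℝ → V5} {f' : V5} {u : ℝ} (hf : HasDerivAt f f' u) :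
    HasDerivAt (fun u => (f u).1) f'.1 u ∧ HasDerivAt (fun u => (f u).2.1) f'.2.1 u ∧
      HasDerivAt (fun u => (f u).2.2) f'.2.2 u :=
  ⟨hf.fst, hf.snd.fst, hf.snd.snd⟩

variable {f f' : ℝ → V5} {e : ℝ → ℝ}

theorem exists_unit_neumann_reduction (he : Continuous e) (hnsq : ∀ u, nsq (f u) = 1)
    (hf : ∀ u, HasDerivAt f (f' u) u)
    (hf' : ∀ u, HasDerivAt f' (-circGen (circGen (f u)) - e u • f u) u)
    (hlim : Tendsto f' atBot (𝓝 0)) (hlim₁ : Tendsto (fun u => (f u).2.1) atBot (𝓝 0))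
    (hlim₂ : Tendsto (fun u => (f u).2.2) atBot (𝓝 0)) :
    ∃ (c₁ c₂ : ℂ) (x v : Fin 3 → ℝ → ℝ), ‖c₁‖ = 1 ∧ ‖c₂‖ = 1 ∧
      IsNeumannSolution ![0, 1, 4] e x v ∧ (∀ u, f u = (x 0 u, c₁ * x 1 u, c₂ * x 2 u)) ∧
      ∀ u, f' u = (v 0 u, c₁ * v 1 u, c₂ * v 2 u) := by
  simp only [circGen_circGen] at hf'
  have hw₁ (u : ℝ) : HasDerivAt (fun u => (f' u).2.1) ((1 - e u) • (f u).2.1) u :=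
    (hasDerivAt_components (hf' u)).2.1.congr_deriv (by simp [sub_smul])
  have hw₂ (u : ℝ) : HasDerivAt (fun u => (f' u).2.2) ((4 - e u) • (f u).2.2) u :=
    (hasDerivAt_components (hf' u)).2.2.congr_deriv (by simp [sub_smul])
  have hlim' := hlim.snd_nhds
  obtain ⟨c₁, A, A', hc₁, hA, hA', hderA, hderA'⟩ := exists_unit_phase (g := fun u => 1 - e u)
    (by fun_prop) (fun u => (hf u).snd.fst) hw₁
    (im_conj_mul_deriv_eq_zero (fun u => (hf u).snd.fst) hw₁ hlim₁ hlim'.fst_nhds)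
  obtain ⟨c₂, B, B', hc₂, hB, hB', hderB, hderB'⟩ := exists_unit_phase (g := fun u => 4 - e u)
    (by fun_prop) (fun u => (hf u).snd.snd) hw₂
    (im_conj_mul_deriv_eq_zero (fun u => (hf u).snd.snd) hw₂ hlim₂ hlim'.snd_nhds)
  refine ⟨c₁, c₂, ![fun u => (f u).1, A, B], ![fun u => (f' u).1, A', B'], hc₁, hc₂, ⟨?_, ?_, ?_⟩,
    fun u => Prod.ext rfl (Prod.ext (hA u) (hB u)),
    fun u => Prod.ext rfl (Prod.ext (hA' u) (hB' u))⟩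
  · intro i u
    fin_cases i
    exacts [(hf u).fst, hderA u, hderB u]
  · intro i u
    fin_cases i
    exacts [(hasDerivAt_components (hf' u)).1.congr_deriv (by simp), hderA' u, hderB' u]
  · intro u
    have h1 := hnsq u
    rw [nsq, hA, hB] at h1
    simpa [Fin.sum_univ_three, Complex.normSq_eq_norm_sq, hc₁, hc₂] using h1

theorem exists_eq_smul_liftCurve_exp (he : Continuous e) (hnsq : ∀ u, nsq (f u) = 1)
    (hf : ∀ u, HasDerivAt f (f' u) u)
    (hf' : ∀ u, HasDerivAt f' (-circGen (circGen (f u)) - e u • f u) u)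
    (hlim : Tendsto f' atBot (𝓝 0)) (hlim₁ : Tendsto (fun u => (f u).2.1) atBot (𝓝 0))
    (hlim₂ : Tendsto (fun u => (f u).2.2) atBot (𝓝 0))
    (hne₁ : ∃ u, (f u).2.1 ≠ 0) (hne₂ : ∃ u, (f u).2.2 ≠ 0) :
    ∃ (ε : ℝ) (μ1 μ2 : ℂ), (ε = 1 ∨ ε = -1) ∧ μ1 ≠ 0 ∧ μ2 ≠ 0 ∧
      ∀ u, f u = ε • liftCurve μ1 μ2 1 (Real.exp u : ℝ) := by
  obtain ⟨c₁, c₂, x, v, hc₁, hc₂, hN, hx, hv⟩ :=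
    exists_unit_neumann_reduction he hnsq hf hf' hlim hlim₁ hlim₂
  have hunit {c : ℂ} (hc : ‖c‖ = 1) {y : ℝ → ℝ} (hy : Tendsto (fun u => c * y u) atBot (𝓝 0)) :
      Tendsto y atBot (𝓝 0) := by
    rw [tendsto_zero_iff_norm_tendsto_zero] at hy ⊢
    simpa [hc] using hy
  rw [funext hv] at hlim
  simp only [hx] at hlim₁ hlim₂ hne₁ hne₂
  have hv0 : ∀ i, Tendsto (v i) atBot (𝓝 0) := by
    intro i
    fin_cases i
    exacts [hlim.fst_nhds, hunit hc₁ hlim.snd_nhds.fst_nhds, hunit hc₂ hlim.snd_nhds.snd_nhds]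
  obtain ⟨ε, p, q, hε, hp, hq, heq⟩ := hN.exists_sign_eq_liftCurve he hv0 (hunit hc₁ hlim₁)
    (hunit hc₂ hlim₂) (fun h => by simp [h] at hne₁) (fun h => by simp [h] at hne₂)
  have hc {c : ℂ} (hc : ‖c‖ = 1) : c ≠ 0 := norm_ne_zero_iff.1 (hc ▸ one_ne_zero)
  refine ⟨ε, c₁ * p, c₂ * q, hε, by simp [hc hc₁, hp], by simp [hc hc₂, hq], fun u => ?_⟩
  have hcurve : liftCurve (c₁ * p) (c₂ * q) 1 (Real.exp u : ℝ) =
      liftCurve (c₁ * (p * Real.exp u : ℝ)) (c₂ * (q * Real.exp (2 * u) : ℝ)) 1 1 := by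
    rw [← mul_one ((Real.exp u : ℝ) : ℂ), liftCurve_mul_right, two_mul, Real.exp_add]
    push_cast
    ring_nf
  rw [hx, hcurve, liftCurve_unit_mul hc₁ hc₂]
  obtain ⟨h₀, h₁, h₂⟩ := by simpa only [Prod.ext_iff, Prod.smul_fst, Prod.smul_snd] using heq u
  exact Prod.ext h₀ (Prod.ext (by simp only [h₁, Prod.smul_snd, Prod.smul_fst, mul_smul_comm])
    (by simp only [h₂, Prod.smul_snd, mul_smul_comm]))

end MeridianODE

section HomogeneousMaps

open Topology

variable {E F : Type*} [NormedAddCommGroup E] [NormedSpace ℝ E] [NormedAddCommGroup F]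
  [NormedSpace ℝ F] {Q : E → F}

theorem hasDerivAt_fderiv_apply {c v : ℝ → E} {c' v' : E} {u : ℝ}
    (hQ : ContDiffAt ℝ 2 Q (c u)) (hc : HasDerivAt c c' u) (hv : HasDerivAt v v' u) :
    HasDerivAt (fun t => fderiv ℝ Q (c t) (v t))
      (fderiv ℝ (fderiv ℝ Q) (c u) c' (v u) + fderiv ℝ Q (c u) v') u := by
  have hD : DifferentiableAt ℝ (fderiv ℝ Q) (c u) :=
    (hQ.fderiv_right (m := 1) (by norm_num)).differentiableAt one_ne_zero
  exact (hD.hasFDerivAt.comp_hasDerivAt u hc).clm_apply hv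

theorem fderiv_apply_self_eq_zero (hhom : ∀ k : ℝ, 0 < k → ∀ x, Q (k • x) = Q x) {x : E}
    (hQ : DifferentiableAt ℝ Q x) : fderiv ℝ Q x x = 0 := by
  have hray : HasDerivAt (fun k : ℝ => k • x) x 1 := by
    simpa using (hasDerivAt_id (1 : ℝ)).smul_const x
  have hQ' : HasFDerivAt Q (fderiv ℝ Q x) ((1 : ℝ) • x) := by simpa using hQ.hasFDerivAt
  refine (hQ'.comp_hasDerivAt 1 hray).unique
    ((hasDerivAt_const (1 : ℝ) (Q x)).congr_of_eventuallyEq ?_)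
  filter_upwards [lt_mem_nhds one_pos] with k hk using hhom k hk x

theorem fderiv_fderiv_apply_self (hhom : ∀ k : ℝ, 0 < k → ∀ x, Q (k • x) = Q x) {x : E}
    (hQ : ContDiffAt ℝ 2 Q x) (v : E) : fderiv ℝ (fderiv ℝ Q) x v x = -fderiv ℝ Q x v := by
  have hline : HasDerivAt (fun t : ℝ => x + t • v) v 0 := by
    simpa using ((hasDerivAt_id (0 : ℝ)).smul_const v).const_add x
  have hx : x + (0 : ℝ) • v = x := by simp
  have hderiv := hasDerivAt_fderiv_apply (u := 0) (hx ▸ hQ) hline hline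
  have hzero : ∀ᶠ t in 𝓝 (0 : ℝ), fderiv ℝ Q (x + t • v) (x + t • v) = 0 := by
    have hnear : ∀ᶠ y in 𝓝 (x + (0 : ℝ) • v), ContDiffAt ℝ 2 Q y := by
      rw [hx]; exact hQ.eventually (by simp)
    filter_upwards [hline.continuousAt.eventually hnear] with t ht
    exact fderiv_apply_self_eq_zero hhom (ht.differentiableAt two_ne_zero)
  have h := hderiv.unique ((hasDerivAt_const (0 : ℝ) (0 : F)).congr_of_eventuallyEq hzero)
  rw [hx] at h
  exact eq_neg_of_add_eq_zero_left h

end HomogeneousMaps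

section EquivariantMaps

open Filter Topology ComplexConjugate

local notation "𝐞" i:max => (EuclideanSpace.single (i : Fin 3) (1 : ℝ) : E3)

theorem vec3_eq (a b c : ℝ) : (!₂[a, b, c] : E3) = a • 𝐞 0 + b • 𝐞 1 + c • 𝐞 2 := by
  ext i
  fin_cases i <;> simp

theorem vec3_meridian_ne_zero (s : ℝ) : (!₂[1, 0, s] : E3) ≠ 0 := fun h => by
  simpa using congrArg (· 0) h

theorem hasDerivAt_vec3 {a b c : ℝ → ℝ} {a' b' c' u : ℝ} (ha : HasDerivAt a a' u)
    (hb : HasDerivAt b b' u) (hc : HasDerivAt c c' u) :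
    HasDerivAt (fun t => (!₂[a t, b t, c t] : E3)) !₂[a', b', c'] u := by
  simp only [vec3_eq]
  exact ((ha.smul_const _).add (hb.smul_const _)).add (hc.smul_const _)

theorem rot3_vec3 (α a b c : ℝ) : rot3 α !₂[a, b, c] =
    !₂[Real.cos α * a - Real.sin α * b, Real.sin α * a + Real.cos α * b, c] := by
  ext i
  fin_cases i <;> simp [rot3]

theorem circAct_zero (p : V5) : circAct 0 p = p := by simp [circAct]

theorem circAct_smul (α c : ℝ) (p : V5) : circAct α (c • p) = c • circAct α p := by
  simp [circAct, mul_left_comm]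

theorem hasDerivAt_circAct (p : V5) (α : ℝ) :
    HasDerivAt (fun α => circAct α p) (circGen (circAct α p)) α := by
  have hexp (k : ℂ) : HasDerivAt (fun α : ℝ => Complex.exp (k * α))
      (k * Complex.exp (k * α)) α := by
    simpa [mul_comm] using ((hasDerivAt_id (α : ℂ)).const_mul k).cexp.comp_ofReal
  refine (hasDerivAt_const α p.1).prodMk (((hexp Complex.I).mul_const p.2.1).prodMk
    ((hexp (2 * Complex.I)).mul_const p.2.2)) |>.congr_deriv ?_
  simp [circGen_apply, circAct, mul_assoc]

theorem snd_eq_zero_of_forall_circAct_eq {p : V5} (hp : ∀ α, circAct α p = p) :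
    p.2 = 0 := by
  have h := (hasDerivAt_circAct p 0).unique
    ((hasDerivAt_const (0 : ℝ) p).congr_of_eventuallyEq (.of_forall hp))
  simpa [circAct_zero, circGen_apply, Prod.ext_iff] using h

/-- The Hopf map `ℂ² → ℝ³`. Normalised, it is the identification `[z₀, z₁] ↦ σ₂⁻¹(z₁ / z₀)` of `ℂP¹`
with `S²`. -/
def hopf (z0 z1 : ℂ) : E3 :=
  !₂[2 * (conj z0 * z1).re, 2 * (conj z0 * z1).im, Complex.normSq z0 - Complex.normSq z1]

theorem hopf_mul_mul (k z0 z1 : ℂ) :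
    hopf (k * z0) (k * z1) = Complex.normSq k • hopf z0 z1 := by
  ext i
  fin_cases i <;> simp [hopf, Complex.normSq_apply] <;> ring

theorem rot3_hopf (α : ℝ) (z0 z1 : ℂ) :
    rot3 α (hopf z0 z1) = hopf z0 (Complex.exp (Complex.I * α) * z1) := by
  have hunit : Complex.normSq (Complex.exp (Complex.I * α)) = 1 := by
    rw [mul_comm, Complex.normSq_eq_norm_sq, Complex.norm_exp_ofReal_mul_I, one_pow]
  rw [hopf, rot3_vec3, hopf, map_mul Complex.normSq, hunit, mul_comm Complex.I,
    Complex.exp_mul_I, ← Complex.ofReal_cos, ← Complex.ofReal_sin]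
  ext i
  fin_cases i <;> simp [-Complex.ofReal_cos, -Complex.ofReal_sin] <;> ring

theorem hopf_one_ofReal (t : ℝ) : hopf 1 t = !₂[2 * t, 0, 1 - t ^ 2] := by
  ext i
  fin_cases i <;> simp [hopf, sq]

theorem hopf_one_exp (u : ℝ) :
    hopf 1 (Real.exp u : ℝ) = (2 * Real.exp u) • (!₂[1, 0, -Real.sinh u] : E3) := by
  have h : Real.exp u * Real.exp (-u) = 1 := by rw [← Real.exp_add]; simp
  rw [hopf_one_ofReal]
  ext i
  fin_cases i <;> simp [Real.sinh_eq]
  linear_combination -h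

theorem hopf_ne_zero {z0 z1 : ℂ} (hz : (z0, z1) ≠ 0) : hopf z0 z1 ≠ 0 := by
  contrapose! hz
  have hre : 2 * (conj z0 * z1).re = 0 := congrArg (· 0) hz
  have him : 2 * (conj z0 * z1).im = 0 := congrArg (· 1) hz
  have hsub : Complex.normSq z0 - Complex.normSq z1 = 0 := congrArg (· 2) hz
  have hprod : conj z0 * z1 = 0 := Complex.ext (by simpa using hre) (by simpa using him)
  rcases mul_eq_zero.1 hprod with h | h
  · simp_all
  · simp_all

theorem continuous_hopf : Continuous fun z : ℂ × ℂ => hopf z.1 z.2 := by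
  unfold hopf
  fun_prop

theorem sum_sq_eq_one_of_mem_sphere2 {x : E3} (hx : x ∈ sphere2) :
    x 0 ^ 2 + x 1 ^ 2 + x 2 ^ 2 = 1 := by
  have h := EuclideanSpace.norm_sq_eq x
  simpa [mem_sphere_zero_iff_norm.1 hx, Fin.sum_univ_three] using h.symm

theorem one_add_pos_of_ne_southPole {x : E3} (hx : x ∈ sphere2) (hne : x ≠ southPole) :
    0 < 1 + x 2 := by
  have hsum := sum_sq_eq_one_of_mem_sphere2 hx
  contrapose! hne
  have h₂ : x 2 = -1 := by nlinarith [sq_nonneg (x 0), sq_nonneg (x 1)]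
  have h₀ : x 0 = 0 := by nlinarith [sq_nonneg (x 0), sq_nonneg (x 1)]
  have h₁ : x 1 = 0 := by nlinarith [sq_nonneg (x 0), sq_nonneg (x 1)]
  ext i
  fin_cases i <;> simp [southPole, h₀, h₁, h₂]

theorem hopf_eq_smul {x : E3} (hx : x ∈ sphere2) :
    hopf ((1 + x 2 : ℝ) : ℂ) ((x 0 : ℂ) + (x 1 : ℂ) * Complex.I) = (2 * (1 + x 2)) • x := by
  have hsum := sum_sq_eq_one_of_mem_sphere2 hx
  ext i
  fin_cases i <;> simp [hopf, Complex.normSq_apply]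
  · ring
  · ring
  · linear_combination -hsum

theorem exists_eq_exp_mul_exp {w : ℂ} (hw : w ≠ 0) :
    ∃ u α : ℝ, w = Complex.exp (Complex.I * α) * (Real.exp u : ℝ) := by
  refine ⟨Real.log ‖w‖, w.arg, ?_⟩
  rw [Real.exp_log (norm_pos_iff.2 hw), mul_comm Complex.I, mul_comm (Complex.exp _),
    Complex.norm_mul_exp_arg_mul_I]

/-- The degree-zero homogeneous extension `Q` of a circle-equivariant harmonic sphere: an
equivariant solution of the harmonic map equation `ΔQ = -|∇Q|² Q` on `ℝ³ ∖ {0}`. -/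
structure IsEquivariantTangentMap (Q : E3 → V5) : Prop where
  contDiffAt : ∀ x ≠ 0, ContDiffAt ℝ 2 Q x
  map_pos_smul : ∀ k : ℝ, 0 < k → ∀ x, Q (k • x) = Q x
  map_rot3 : ∀ α, ∀ x ≠ 0, Q (rot3 α x) = circAct α (Q x)
  nsq_eq_one : ∀ x ≠ 0, nsq (Q x) = 1
  lap_eq : ∀ x ≠ 0, lap Q x = -(gradSq Q x • Q x)

namespace IsEquivariantTangentMap

variable {Q : E3 → V5}

theorem differentiableAt (hQ : IsEquivariantTangentMap Q) {x : E3} (hx : x ≠ 0) :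
    DifferentiableAt ℝ Q x :=
  (hQ.contDiffAt x hx).differentiableAt two_ne_zero

theorem differentiableAt_fderiv (hQ : IsEquivariantTangentMap Q) {x : E3} (hx : x ≠ 0) :
    DifferentiableAt ℝ (fderiv ℝ Q) x :=
  ((hQ.contDiffAt x hx).fderiv_right (m := 1) (by norm_num)).differentiableAt one_ne_zero

theorem fderiv_zero_add_smul (hQ : IsEquivariantTangentMap Q) (s : ℝ) :
    fderiv ℝ Q !₂[1, 0, s] (𝐞 0) + s • fderiv ℝ Q !₂[1, 0, s] (𝐞 2) = 0 := by
  have h := fderiv_apply_self_eq_zero hQ.map_pos_smul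
    (hQ.differentiableAt (vec3_meridian_ne_zero s))
  nth_rw 2 [vec3_eq] at h
  simpa using h

theorem fderiv_fderiv_zero_zero (hQ : IsEquivariantTangentMap Q) (s : ℝ) :
    fderiv ℝ (fderiv ℝ Q) !₂[1, 0, s] (𝐞 0) (𝐞 0) =
      s ^ 2 • fderiv ℝ (fderiv ℝ Q) !₂[1, 0, s] (𝐞 2) (𝐞 2) +
        (2 * s) • fderiv ℝ Q !₂[1, 0, s] (𝐞 2) := by
  have hcd := hQ.contDiffAt _ (vec3_meridian_ne_zero s)
  have hsymm := hcd.isSymmSndFDerivAt (by simp) (𝐞 0) (𝐞 2)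
  have hself (v : E3) : fderiv ℝ (fderiv ℝ Q) !₂[1, 0, s] v (𝐞 0) +
      s • fderiv ℝ (fderiv ℝ Q) !₂[1, 0, s] v (𝐞 2) = -fderiv ℝ Q !₂[1, 0, s] v := by
    rw [← fderiv_fderiv_apply_self hQ.map_pos_smul hcd v]
    nth_rw 4 [vec3_eq]
    simp
  linear_combination (norm := module) hself (𝐞 0) - s • hself (𝐞 2) - s • hsymm -
    hQ.fderiv_zero_add_smul s

theorem fderiv_fderiv_one_one (hQ : IsEquivariantTangentMap Q) (s : ℝ) :
    fderiv ℝ (fderiv ℝ Q) !₂[1, 0, s] (𝐞 1) (𝐞 1) =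
      circGen (circGen (Q !₂[1, 0, s])) + fderiv ℝ Q !₂[1, 0, s] (𝐞 0) := by
  set c : ℝ → E3 := fun α => !₂[Real.cos α, Real.sin α, s]
  have hne (α : ℝ) : c α ≠ 0 := fun h => by
    have h₀ : Real.cos α = 0 := congrArg (· 0) h
    have h₁ : Real.sin α = 0 := congrArg (· 1) h
    simpa [h₀, h₁] using Real.sin_sq_add_cos_sq α
  have hc (α : ℝ) : HasDerivAt c !₂[-Real.sin α, Real.cos α, 0] α :=
    hasDerivAt_vec3 (Real.hasDerivAt_cos α) (Real.hasDerivAt_sin α) (hasDerivAt_const α s)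
  have hc' : HasDerivAt (fun α => (!₂[-Real.sin α, Real.cos α, 0] : E3)) !₂[-1, 0, 0] 0 := by
    simpa using hasDerivAt_vec3 (Real.hasDerivAt_sin 0).neg (Real.hasDerivAt_cos 0)
      (hasDerivAt_const 0 (0 : ℝ))
  have hrot (α : ℝ) : Q (c α) = circAct α (Q !₂[1, 0, s]) := by
    rw [← hQ.map_rot3 α _ (vec3_meridian_ne_zero s), rot3_vec3]
    simp [c]
  have hfirst (α : ℝ) : fderiv ℝ Q (c α) !₂[-Real.sin α, Real.cos α, 0] =
      circGen (circAct α (Q !₂[1, 0, s])) :=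
    ((hQ.differentiableAt (hne α)).hasFDerivAt.comp_hasDerivAt α (hc α)).unique
      ((hasDerivAt_circAct _ α).congr_of_eventuallyEq (.of_forall hrot))
  have hsecond := (hasDerivAt_fderiv_apply (hQ.contDiffAt _ (hne 0)) (hc 0) hc').unique
    ((circGen.hasFDerivAt.comp_hasDerivAt 0 (hasDerivAt_circAct _ 0)).congr_of_eventuallyEq
      (.of_forall hfirst))
  have h₁ : (!₂[0, 1, 0] : E3) = 𝐞 1 := by simp [vec3_eq]
  have h₀ : (!₂[-1, 0, 0] : E3) = -𝐞 0 := by simp [vec3_eq]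
  simp only [c, Real.sin_zero, Real.cos_zero, neg_zero, circAct_zero, h₁, h₀, map_neg] at hsecond
  rw [← hsecond, neg_add_cancel_right]

theorem lap_meridian (hQ : IsEquivariantTangentMap Q) (s : ℝ) :
    lap Q !₂[1, 0, s] = (1 + s ^ 2) • fderiv ℝ (fderiv ℝ Q) !₂[1, 0, s] (𝐞 2) (𝐞 2) +
      s • fderiv ℝ Q !₂[1, 0, s] (𝐞 2) + circGen (circGen (Q !₂[1, 0, s])) := by
  have happly (i : Fin 3) : fderiv ℝ (fun y => fderiv ℝ Q y (𝐞 i)) !₂[1, 0, s] (𝐞 i) =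
      fderiv ℝ (fderiv ℝ Q) !₂[1, 0, s] (𝐞 i) (𝐞 i) := by
    rw [fderiv_clm_apply (hQ.differentiableAt_fderiv (vec3_meridian_ne_zero s)) (by fun_prop)]
    simp
  rw [lap, Fin.sum_univ_three]
  simp only [happly, hQ.fderiv_fderiv_zero_zero, hQ.fderiv_fderiv_one_one]
  linear_combination (norm := module) hQ.fderiv_zero_add_smul s

theorem hasDerivAt_meridian (hQ : IsEquivariantTangentMap Q) (u : ℝ) :
    HasDerivAt (fun u => Q !₂[1, 0, -Real.sinh u])
      (fderiv ℝ Q !₂[1, 0, -Real.sinh u] !₂[0, 0, -Real.cosh u]) u :=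
  (hQ.differentiableAt (vec3_meridian_ne_zero _)).hasFDerivAt.comp_hasDerivAt u
    (hasDerivAt_vec3 (hasDerivAt_const u 1) (hasDerivAt_const u 0) (Real.hasDerivAt_sinh u).fun_neg)

theorem hasDerivAt_deriv_meridian (hQ : IsEquivariantTangentMap Q) (u : ℝ) :
    HasDerivAt (fun u => fderiv ℝ Q !₂[1, 0, -Real.sinh u] !₂[0, 0, -Real.cosh u])
      (-circGen (circGen (Q !₂[1, 0, -Real.sinh u])) -
        gradSq Q !₂[1, 0, -Real.sinh u] • Q !₂[1, 0, -Real.sinh u]) u := by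
  have hm := vec3_meridian_ne_zero (-Real.sinh u)
  refine (hasDerivAt_fderiv_apply (hQ.contDiffAt _ hm)
    (hasDerivAt_vec3 (hasDerivAt_const u 1) (hasDerivAt_const u 0) (Real.hasDerivAt_sinh u).fun_neg)
    (hasDerivAt_vec3 (hasDerivAt_const u 0) (hasDerivAt_const u 0)
      (Real.hasDerivAt_cosh u).fun_neg)).congr_deriv ?_
  have hvec (a : ℝ) : (!₂[0, 0, a] : E3) = a • 𝐞 2 := by simp [vec3_eq]
  have hlap := hQ.lap_meridian (-Real.sinh u)
  rw [hQ.lap_eq _ hm, neg_sq, add_comm 1, ← Real.cosh_sq] at hlap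
  simp only [hvec, map_smul, smul_apply]
  linear_combination (norm := module) -hlap

theorem continuous_gradSq_meridian (hQ : IsEquivariantTangentMap Q) :
    Continuous fun u => gradSq Q !₂[1, 0, -Real.sinh u] := by
  have hfderiv : Continuous fun u => fderiv ℝ Q !₂[1, 0, -Real.sinh u] :=
    continuous_iff_continuousAt.2 fun u =>
      ContinuousAt.comp (f := fun u => (!₂[1, 0, -Real.sinh u] : E3))
        (hQ.differentiableAt_fderiv (vec3_meridian_ne_zero _)).continuousAt (by fun_prop)
  unfold gradSq nsq
  have := Complex.continuous_normSq
  fun_prop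

theorem map_hopf_one_exp (hQ : IsEquivariantTangentMap Q) (u : ℝ) :
    Q (hopf 1 (Real.exp u : ℝ)) = Q !₂[1, 0, -Real.sinh u] := by
  rw [hopf_one_exp, hQ.map_pos_smul _ (by positivity)]

theorem tendsto_deriv_meridian (hQ : IsEquivariantTangentMap Q) :
    Tendsto (fun u => fderiv ℝ Q !₂[1, 0, -Real.sinh u] !₂[0, 0, -Real.cosh u]) atBot (𝓝 0) := by
  have hcurve (t : ℝ) : HasDerivAt (fun t : ℝ => hopf 1 t) !₂[2, 0, -(2 * t)] t := by
    simp only [hopf_one_ofReal]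
    refine hasDerivAt_vec3 ?_ (hasDerivAt_const t 0) ?_
    · simpa using (hasDerivAt_id t).const_mul 2
    · simpa using ((hasDerivAt_id t).pow 2).const_sub 1
  have hne (t : ℝ) : hopf 1 t ≠ 0 := hopf_ne_zero (by simp)
  have hderiv (u : ℝ) : fderiv ℝ Q !₂[1, 0, -Real.sinh u] !₂[0, 0, -Real.cosh u] =
      Real.exp u • fderiv ℝ Q (hopf 1 (Real.exp u : ℝ)) !₂[2, 0, -(2 * Real.exp u)] := by
    have h := ((hQ.differentiableAt (hne _)).hasFDerivAt.comp_hasDerivAt _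
      (hcurve (Real.exp u))).scomp u (Real.hasDerivAt_exp u)
    exact (hQ.hasDerivAt_meridian u).unique
      (h.congr_of_eventuallyEq (.of_forall fun u => (hQ.map_hopf_one_exp u).symm))
  have hcont : ContinuousAt (fun t : ℝ => t • fderiv ℝ Q (hopf 1 t) !₂[2, 0, -(2 * t)]) 0 := by
    have hQ' : ContinuousAt (fun t : ℝ => fderiv ℝ Q (hopf 1 t)) 0 :=
      ContinuousAt.comp (f := fun t : ℝ => hopf 1 t)
        (hQ.differentiableAt_fderiv (hne 0)).continuousAt (hcurve 0).continuousAt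
    fun_prop
  have hlim := hcont.tendsto.comp Real.tendsto_exp_atBot
  simp only [zero_smul] at hlim
  exact hlim.congr fun u => (hderiv u).symm

theorem continuousAt_hopf (hQ : IsEquivariantTangentMap Q) {z : ℂ × ℂ} (hz : z ≠ 0) :
    ContinuousAt (fun z : ℂ × ℂ => Q (hopf z.1 z.2)) z :=
  ContinuousAt.comp (f := fun z : ℂ × ℂ => hopf z.1 z.2)
    (hQ.differentiableAt (hopf_ne_zero hz)).continuousAt continuous_hopf.continuousAt

theorem map_hopf_exp_mul (hQ : IsEquivariantTangentMap Q) (α : ℝ) {z0 z1 : ℂ}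
    (hz : (z0, z1) ≠ 0) :
    Q (hopf z0 (Complex.exp (Complex.I * α) * z1)) = circAct α (Q (hopf z0 z1)) := by
  rw [← rot3_hopf, hQ.map_rot3 α _ (hopf_ne_zero hz)]

theorem map_hopf_mul_mul (hQ : IsEquivariantTangentMap Q) {k : ℂ} (hk : k ≠ 0) (z0 z1 : ℂ) :
    Q (hopf (k * z0) (k * z1)) = Q (hopf z0 z1) := by
  rw [hopf_mul_mul, hQ.map_pos_smul _ (Complex.normSq_pos.2 hk)]

theorem snd_eq_zero_of_axis (hQ : IsEquivariantTangentMap Q) {x : E3} (hx : x ≠ 0)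
    (hx₀ : x 0 = 0) (hx₁ : x 1 = 0) : (Q x).2 = 0 := by
  refine snd_eq_zero_of_forall_circAct_eq fun α => ?_
  rw [← hQ.map_rot3 α x hx]
  congr 1
  ext i
  fin_cases i <;> simp [rot3, hx₀, hx₁]

theorem tendsto_meridian (hQ : IsEquivariantTangentMap Q) :
    Tendsto (fun u => Q !₂[1, 0, -Real.sinh u]) atBot (𝓝 (Q (hopf 1 0))) := by
  have hcurve : Tendsto (fun u : ℝ => ((1 : ℂ), ((Real.exp u : ℝ) : ℂ))) atBot (𝓝 (1, 0)) := by
    have h := (Complex.continuous_ofReal.tendsto 0).comp Real.tendsto_exp_atBot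
    simpa using tendsto_const_nhds.prodMk_nhds h
  simpa only [Function.comp_def, hQ.map_hopf_one_exp] using
    (hQ.continuousAt_hopf (z := (1, 0)) (by simp)).tendsto.comp hcurve

theorem exists_map_hopf_eq_circAct (hQ : IsEquivariantTangentMap Q) {z0 z1 : ℂ} (h₀ : z0 ≠ 0)
    (h₁ : z1 ≠ 0) : ∃ u α : ℝ, z1 = z0 * (Complex.exp (Complex.I * α) * (Real.exp u : ℝ)) ∧
      Q (hopf z0 z1) = circAct α (Q !₂[1, 0, -Real.sinh u]) := by
  obtain ⟨u, α, h⟩ := exists_eq_exp_mul_exp (div_ne_zero h₁ h₀)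
  have hz1 : z1 = z0 * (Complex.exp (Complex.I * α) * (Real.exp u : ℝ)) := by
    rw [← h, mul_div_cancel₀ _ h₀]
  refine ⟨u, α, hz1, ?_⟩
  have hscale := hQ.map_hopf_mul_mul h₀ 1 (Complex.exp (Complex.I * α) * (Real.exp u : ℝ))
  rw [mul_one, ← hz1] at hscale
  rw [hscale, hQ.map_hopf_exp_mul α (by simp), hQ.map_hopf_one_exp]

theorem exists_eq_circAct_meridian (hQ : IsEquivariantTangentMap Q) {x : E3} (hx : x ∈ sphere2)
    (hQx : (Q x).2 ≠ 0) : ∃ u α : ℝ, Q x = circAct α (Q !₂[1, 0, -Real.sinh u]) := by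
  have hz1 : (x 0 : ℂ) + (x 1 : ℂ) * Complex.I ≠ 0 := fun h => by
    have h₀ : x 0 = 0 := by simpa using congrArg Complex.re h
    have h₁ : x 1 = 0 := by simpa using congrArg Complex.im h
    exact hQx (hQ.snd_eq_zero_of_axis (Metric.ne_of_mem_sphere hx one_ne_zero) h₀ h₁)
  have hsouth : x ≠ southPole := fun h => hz1 (by simp [h, southPole])
  have hpos := one_add_pos_of_ne_southPole hx hsouth
  obtain ⟨u, α, -, h⟩ := hQ.exists_map_hopf_eq_circAct (z0 := ((1 + x 2 : ℝ) : ℂ))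
    (Complex.ofReal_ne_zero.2 hpos.ne') hz1
  exact ⟨u, α, by rw [← h, hopf_eq_smul hx, hQ.map_pos_smul _ (by positivity)]⟩

theorem map_hopf_eq_smul_liftCurve (hQ : IsEquivariantTangentMap Q) {ε : ℝ} {μ1 μ2 : ℂ}
    (hμ1 : μ1 ≠ 0) (hμ2 : μ2 ≠ 0)
    (hmeridian : ∀ u, Q !₂[1, 0, -Real.sinh u] = ε • liftCurve μ1 μ2 1 (Real.exp u : ℝ))
    {z : ℂ × ℂ} (hz : z ≠ 0) : Q (hopf z.1 z.2) = ε • liftCurve μ1 μ2 z.1 z.2 := by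
  set S : Set (ℂ × ℂ) := {0}ᶜ ×ˢ {0}ᶜ
  have hS : Dense S := (dense_compl_singleton 0).prod (dense_compl_singleton 0)
  have heq : ∀ z ∈ S, Q (hopf z.1 z.2) = ε • liftCurve μ1 μ2 z.1 z.2 := by
    rintro ⟨z0, z1⟩ ⟨h₀ : z0 ≠ 0, h₁ : z1 ≠ 0⟩
    obtain ⟨u, α, hz1, h⟩ := hQ.exists_map_hopf_eq_circAct h₀ h₁
    rw [h, hmeridian, circAct_smul, circAct_liftCurve, hz1, ← liftCurve_mul_mul h₀, mul_one]
  have : (𝓝[S] z).NeBot := mem_closure_iff_nhdsWithin_neBot.1 (hS z)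
  exact tendsto_nhds_unique_of_eventuallyEq
    ((hQ.continuousAt_hopf hz).mono_left nhdsWithin_le_nhds)
    (((continuousAt_liftCurve hμ1 hμ2 hz).const_smul ε).mono_left nhdsWithin_le_nhds)
    (eventually_mem_nhdsWithin.mono heq)

theorem eq_smul_omegaFam (hQ : IsEquivariantTangentMap Q) {ε : ℝ} {μ1 μ2 : ℂ}
    (hμ1 : μ1 ≠ 0) (hμ2 : μ2 ≠ 0)
    (hmeridian : ∀ u, Q !₂[1, 0, -Real.sinh u] = ε • liftCurve μ1 μ2 1 (Real.exp u : ℝ))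
    {x : E3} (hx : x ∈ sphere2) : Q x = ε • omegaFam μ1 μ2 x := by
  by_cases hsouth : x = southPole
  · have h := hQ.map_hopf_eq_smul_liftCurve hμ1 hμ2 hmeridian (z := (0, 1)) (by simp)
    have hpole : hopf 0 1 = southPole := by ext i; fin_cases i <;> simp [hopf, southPole]
    rw [hpole] at h
    simp [omegaFam, hsouth, hμ1, hμ2, h]
  · have hpos := one_add_pos_of_ne_southPole hx hsouth
    rw [omegaFam, if_neg hsouth, ← hQ.map_hopf_eq_smul_liftCurve hμ1 hμ2 hmeridian
      (z := (((1 + x 2 : ℝ) : ℂ), (x 0 : ℂ) + (x 1 : ℂ) * Complex.I))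
      (fun h => Complex.ofReal_ne_zero.2 hpos.ne' (congrArg Prod.fst h)),
      hopf_eq_smul hx, hQ.map_pos_smul _ (by positivity)]

theorem exists_eq_smul_omegaFam (hQ : IsEquivariantTangentMap Q)
    (h₁ : ∃ x ∈ sphere2, (Q x).2.1 ≠ 0) (h₂ : ∃ x ∈ sphere2, (Q x).2.2 ≠ 0) :
    ∃ (ε : ℝ) (μ1 μ2 : ℂ), (ε = 1 ∨ ε = -1) ∧ μ1 ≠ 0 ∧ μ2 ≠ 0 ∧
      ∀ x ∈ sphere2, Q x = ε • omegaFam μ1 μ2 x := by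
  have hpole : (Q (hopf 1 0)).2 = 0 :=
    hQ.snd_eq_zero_of_axis (hopf_ne_zero (by simp)) (by simp [hopf]) (by simp [hopf])
  have hlim := hQ.tendsto_meridian.snd_nhds
  rw [hpole] at hlim
  have hne₁ : ∃ u, (Q !₂[1, 0, -Real.sinh u]).2.1 ≠ 0 := by
    obtain ⟨x, hx, hne⟩ := h₁
    obtain ⟨u, α, h⟩ := hQ.exists_eq_circAct_meridian hx fun h => hne (by simp [h])
    exact ⟨u, fun hu => hne (by simp [h, circAct, hu])⟩
  have hne₂ : ∃ u, (Q !₂[1, 0, -Real.sinh u]).2.2 ≠ 0 := by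
    obtain ⟨x, hx, hne⟩ := h₂
    obtain ⟨u, α, h⟩ := hQ.exists_eq_circAct_meridian hx fun h => hne (by simp [h])
    exact ⟨u, fun hu => hne (by simp [h, circAct, hu])⟩
  obtain ⟨ε, μ1, μ2, hε, hμ1, hμ2, hmeridian⟩ := exists_eq_smul_liftCurve_exp
    hQ.continuous_gradSq_meridian (fun u => hQ.nsq_eq_one _ (vec3_meridian_ne_zero _))
    hQ.hasDerivAt_meridian hQ.hasDerivAt_deriv_meridian hQ.tendsto_deriv_meridian
    hlim.fst_nhds hlim.snd_nhds hne₁ hne₂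
  exact ⟨ε, μ1, μ2, hε, hμ1, hμ2, fun x hx => hQ.eq_smul_omegaFam hμ1 hμ2 hmeridian hx⟩

end IsEquivariantTangentMap

end EquivariantMaps

section HarmonicSpheres

theorem norm_rot3 (α : ℝ) (x : E3) : ‖rot3 α x‖ = ‖x‖ := by
  rw [← sq_eq_sq₀ (norm_nonneg _) (norm_nonneg _), EuclideanSpace.norm_sq_eq,
    EuclideanSpace.norm_sq_eq]
  simp only [Fin.sum_univ_three, Real.norm_eq_abs, sq_abs]
  simp [rot3]
  linear_combination (x 0 ^ 2 + x 1 ^ 2) * Real.sin_sq_add_cos_sq α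

theorem rot3_smul (α k : ℝ) (x : E3) : rot3 α (k • x) = k • rot3 α x := by
  ext i
  fin_cases i <;> simp [rot3] <;> ring

theorem inv_norm_smul_mem_sphere2 {x : E3} (hx : x ≠ 0) : ‖x‖⁻¹ • x ∈ sphere2 :=
  mem_sphere_zero_iff_norm.2 (norm_smul_inv_norm (𝕜 := ℝ) hx)

theorem homExt_eq_of_mem_sphere2 (ω : E3 → V5) {x : E3} (hx : x ∈ sphere2) :
    homExt ω x = ω x := by
  rw [homExt, mem_sphere_zero_iff_norm.1 hx, inv_one, one_smul]

theorem isEquivariantTangentMap_homExt {ω : E3 → V5} (hsphere : ∀ x ∈ sphere2, nsq (ω x) = 1)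
    (hdiff : ContDiffOn ℝ 2 (homExt ω) {0}ᶜ)
    (hharm : ∀ x ≠ 0, lap (homExt ω) x + gradSq (homExt ω) x • homExt ω x = 0)
    (heq : EquivariantS ω) : IsEquivariantTangentMap (homExt ω) where
  contDiffAt x hx := hdiff.contDiffAt (isOpen_compl_singleton.mem_nhds hx)
  map_pos_smul k hk x := by
    rw [homExt, norm_smul, Real.norm_of_nonneg hk.le, smul_smul, mul_inv, mul_right_comm,
      inv_mul_cancel₀ hk.ne', one_mul, homExt]
  map_rot3 α x hx := by
    rw [homExt, norm_rot3, ← rot3_smul, heq α _ (inv_norm_smul_mem_sphere2 hx), homExt]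
  nsq_eq_one x hx := hsphere _ (inv_norm_smul_mem_sphere2 hx)
  lap_eq x hx := eq_neg_of_add_eq_zero_left (hharm x hx)

theorem exists_mem_apply_ne_zero_of_span_eq_top {K V W : Type*} [Semiring K] [AddCommMonoid V]
    [AddCommMonoid W] [Module K V] [Module K W] {s : Set V} (hs : Submodule.span K s = ⊤)
    {φ : V →ₗ[K] W} (hφ : φ ≠ 0) : ∃ v ∈ s, φ v ≠ 0 := by
  contrapose! hφ
  exact LinearMap.ext_on hs hφ

theorem exists_components_ne_zero_of_span_eq_top {s : Set V5} (hs : Submodule.span ℝ s = ⊤) :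
    (∃ p ∈ s, p.2.1 ≠ 0) ∧ ∃ p ∈ s, p.2.2 ≠ 0 := by
  have hne (φ : V5 →ₗ[ℝ] ℂ) (p : V5) (hp : φ p ≠ 0) : ∃ p ∈ s, φ p ≠ 0 :=
    exists_mem_apply_ne_zero_of_span_eq_top hs fun h => hp (by simp [h])
  exact ⟨hne (LinearMap.fst ℝ ℂ ℂ ∘ₗ LinearMap.snd ℝ ℝ (ℂ × ℂ)) (0, 1, 0) one_ne_zero,
    hne (LinearMap.snd ℝ ℂ ℂ ∘ₗ LinearMap.snd ℝ ℝ (ℂ × ℂ)) (0, 0, 1) one_ne_zero⟩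

end HarmonicSpheres

theorem statement11_general (ω : E3 → V5) (hsphere : ∀ x ∈ sphere2, nsq (ω x) = 1)
    (hdiff : ContDiffOn ℝ 2 (homExt ω) {0}ᶜ)
    (hharm : ∀ x ≠ 0, lap (homExt ω) x + gradSq (homExt ω) x • homExt ω x = 0)
    (heq : EquivariantS ω) (h₁ : ∃ x ∈ sphere2, (ω x).2.1 ≠ 0)
    (h₂ : ∃ x ∈ sphere2, (ω x).2.2 ≠ 0) :
    ∃ μ1 μ2 : ℂ, μ1 ≠ 0 ∧ μ2 ≠ 0 ∧
      ((∀ x ∈ sphere2, ω x = omegaFam μ1 μ2 x) ∨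
        (∀ x ∈ sphere2, ω x = -omegaFam μ1 μ2 x)) := by
  have hhom {x : E3} : x ∈ sphere2 → homExt ω x = ω x := homExt_eq_of_mem_sphere2 ω
  obtain ⟨ε, μ1, μ2, hε, hμ1, hμ2, h⟩ :=
    (isEquivariantTangentMap_homExt hsphere hdiff hharm heq).exists_eq_smul_omegaFam
      (h₁.imp fun x ⟨hx, hne⟩ => ⟨hx, by rwa [hhom hx]⟩)
      (h₂.imp fun x ⟨hx, hne⟩ => ⟨hx, by rwa [hhom hx]⟩)
  refine ⟨μ1, μ2, hμ1, hμ2, hε.imp ?_ ?_⟩ <;> rintro rfl x hx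
  · rw [← hhom hx, h x hx, one_smul]
  · rw [← hhom hx, h x hx, neg_one_smul]

/-- Classification of linearly full equivariant harmonic spheres: every linearly full,
smooth, S¹-equivariant harmonic sphere ω : S² → S⁴ coincides, up to composition with
the antipodal map of S⁴, with a member ω_{μ₁,μ₂} (μ₁, μ₂ ∈ ℂ ∖ {0}) of the explicit
two-parameter family. -/
theorem statement11 (ω : E3 → V5)
    (hH : IsHarmonicSphere ω) (heq : EquivariantS ω)
    (hfull : Submodule.span ℝ (ω '' sphere2) = ⊤) :
    ∃ μ1 μ2 : ℂ, μ1 ≠ 0 ∧ μ2 ≠ 0 ∧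
      ((∀ x ∈ sphere2, ω x = omegaFam μ1 μ2 x) ∨
        (∀ x ∈ sphere2, ω x = -omegaFam μ1 μ2 x)) := by
  have ⟨h₁, h₂⟩ := exists_components_ne_zero_of_span_eq_top hfull
  exact statement11_general ω hH.1 (hH.2.1.of_le (by norm_cast)) hH.2.2 heq
    (by simpa using h₁) (by simpa using h₂)
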